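/- Fix an integer base b ≥ 2, p, q ∈ [1,∞], and α with α ≥ 1/p if q = 1 and α > 1/p if q > 1. Set C_{b,α,p,q} = b^{1/p′} (1 − b^{−q′(α−1/p)})^{−1/q′}, where p′, q′ are the conjugate exponents of p, q (with the convention r^{1/∞} = 1). Let f ∈ L_1([0,1]) satisfy ‖f‖_{wav,α,p,q} < ∞. Then for every x ∈ [0,1] the series Σ_{j=0}^∞ Σ_{k∈Δ_{j−1}} Σ_{i∈∇_j} ⟨f,ψ^j_{i,k}⟩ ψ^j_{i,k}(x) converges absolutely, with Σ_{j=0}^∞ Σ_{k∈Δ_{j−1}} Σ_{i∈∇_j} |⟨f,ψ^j_{i,k}⟩| |ψ^j_{i,k}(x)| ≤ C_{b,α,p,q} ‖f‖_{wav,α,p,q}, and the sum S(f)(x) of the series equals f(x) for almost every x ∈ [0,1]. -/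

import Mathlib

open MeasureTheory ENNReal Set

noncomputable section

/-- The index set `Δ_{j-1}` (for level `j`). -/
def deltaIdx (b j : ℕ) : Finset ℕ := if j = 0 then {0} else Finset.range (b ^ (j - 1))

/-- The index set `∇_j`. -/
def nablaIdx (b j : ℕ) : Finset ℕ := if j = 0 then {0} else Finset.range b

/-- The univariate Haar-type wavelet `ψ^j_{i,k}` in base `b`. -/
def haarPsi (b : ℕ) (j i k : ℕ) (x : ℝ) : ℝ :=
  if j = 0 then (Set.Ico (0:ℝ) 1).indicator (fun _ => (1:ℝ)) x
  else (b : ℝ) ^ ((j : ℝ) / 2 - 1) *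
    ((b : ℝ) *
        (Set.Ico ((b:ℝ) ^ (-(j:ℝ)) * ((b:ℝ) * k + i))
          ((b:ℝ) ^ (-(j:ℝ)) * ((b:ℝ) * k + i + 1))).indicator (fun _ => (1:ℝ)) x
      - (Set.Ico ((b:ℝ) ^ (1 - (j:ℝ)) * k)
          ((b:ℝ) ^ (1 - (j:ℝ)) * (k + 1))).indicator (fun _ => (1:ℝ)) x)

/-- The Haar coefficient `⟨f, ψ^j_{i,k}⟩ = ∫_0^1 f ψ^j_{i,k}`. -/
def haarCoefU (b : ℕ) (f : ℝ → ℝ) (j i k : ℕ) : ℝ :=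
  ∫ x in Set.Icc (0:ℝ) 1, f x * haarPsi b j i k x

/-- Finite `ℓ^p`-type norm with exponent `p ∈ [1,∞]` (maximum when `p = ∞`). -/
def lpIdx (p : ℝ≥0∞) {ι : Type*} (A : Finset ι) (g : ι → ℝ≥0∞) : ℝ≥0∞ :=
  if p = ∞ then A.sup g else (∑ a ∈ A, g a ^ p.toReal) ^ (1 / p.toReal)

/-- `ℓ^q`-type norm over an arbitrary index type (supremum when `q = ∞`). -/
def lqIdx (q : ℝ≥0∞) {ι : Type*} (g : ι → ℝ≥0∞) : ℝ≥0∞ :=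
  if q = ∞ then ⨆ i, g i else (∑' i, g i ^ q.toReal) ^ (1 / q.toReal)

/-- The univariate Haar wavelet norm `‖f‖_{wav,α,p,q}`. -/
def wavNormU (b : ℕ) (α : ℝ) (p q : ℝ≥0∞) (f : ℝ → ℝ) : ℝ≥0∞ :=
  lqIdx q fun j : ℕ =>
    ENNReal.ofReal ((b : ℝ) ^ ((α - 1 / p.toReal + 1 / 2) * (j : ℝ))) *
      lpIdx p (deltaIdx b j ×ˢ nablaIdx b j)
        (fun ki => ENNReal.ofReal |haarCoefU b f j ki.2 ki.1|)

/-- The pointwise wavelet expansion `S(f)`. -/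
def wavExpU (b : ℕ) (f : ℝ → ℝ) (x : ℝ) : ℝ :=
  ∑' j : ℕ, ∑ k ∈ deltaIdx b j, ∑ i ∈ nablaIdx b j,
    haarCoefU b f j i k * haarPsi b j i k x

/-- The constant `C_{b,α,p,q} = b^{1/p'} (1 - b^{-q'(α-1/p)})^{-1/q'}` (with the conventions
`1/∞ = 0` and `r^{1/∞} = r^0 = 1`, so that `C = b^{1/p'}` when `q' = ∞`). -/
def Cconst (b : ℕ) (α : ℝ) (p p' q' : ℝ≥0∞) : ℝ :=
  (b : ℝ) ^ ((1 / p').toReal) *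
    (1 - (b : ℝ) ^ (-(q'.toReal) * (α - 1 / p.toReal))) ^ (-(1 / q'.toReal))

/-!
Fix a parent interval of level `n`. If `aᵢ` are the integrals of `f` over its `b` children and `uᵢ`
the indicators of the children, then up to a constant the coefficients of `f` are `b aᵢ - ∑ a` and
the wavelets are `b uᵢ - ∑ u`. Summing the products over `i`, the block of level `n + 1` becomes the
difference of the step functions of `b`-adic means on the intervals of length `b⁻⁽ⁿ⁺¹⁾` and `b⁻ⁿ`.
The partial sums telescope to the step function of means, which tends to `f` almost everywhere by
Lebesgue differentiation.

At a given point each level has at most `b` nonzero wavelets, all bounded by `b ^ (j / 2)`. Hölder's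
inequality with exponents `p`, `p'` inside the level yields the factor `b ^ (1 / p')`, and Hölder's
inequality with exponents `q`, `q'` across levels, against the geometric sequence
`b ^ (-(α - 1 / p) j)`, yields the other factor of the constant.
-/

section SequenceNorms

variable {ι : Type*}

lemma lpIdx_eq_lqIdx (p : ℝ≥0∞) (A : Finset ι) (g : ι → ℝ≥0∞) :
    lpIdx p A g = lqIdx p fun a : A => g a := by
  simp only [lpIdx, lqIdx, tsum_fintype, Finset.sum_coe_sort A fun a => g a ^ p.toReal,
    Finset.sup_eq_iSup, iSup_subtype]

lemma tsum_mul_le_iSup_mul_tsum (f g : ι → ℝ≥0∞) : ∑' i, f i * g i ≤ (⨆ i, f i) * ∑' i, g i := by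
  rw [← ENNReal.tsum_mul_left]
  gcongr with i
  exact le_iSup f i

lemma tsum_mul_le_lqIdx_mul_lqIdx (p q : ℝ≥0∞) [p.HolderConjugate q] (f g : ι → ℝ≥0∞) :
    ∑' i, f i * g i ≤ lqIdx p f * lqIdx q g := by
  by_cases hp : p = ∞
  · obtain rfl : q = 1 := (HolderConjugate.eq_top_iff_eq_one p q).1 hp
    simpa [lqIdx, hp] using tsum_mul_le_iSup_mul_tsum f g
  by_cases hq : q = ∞
  · obtain rfl : p = 1 := (HolderConjugate.eq_top_iff_eq_one q p).1 hq
    simpa [lqIdx, hq, mul_comm] using tsum_mul_le_iSup_mul_tsum g f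
  let : MeasurableSpace ι := ⊤
  have hpq : p.toReal.HolderConjugate q.toReal :=
    HolderConjugate.toReal_of_ne_top hp hq
  simpa [lqIdx, hp, hq, lintegral_count] using
    ENNReal.lintegral_mul_le_Lp_mul_Lq Measure.count hpq (f := f) (g := g)
      measurable_from_top.aemeasurable measurable_from_top.aemeasurable

lemma sum_mul_le_lpIdx_mul_lpIdx (p q : ℝ≥0∞) [p.HolderConjugate q] (A : Finset ι)
    (f g : ι → ℝ≥0∞) : ∑ a ∈ A, f a * g a ≤ lpIdx p A f * lpIdx q A g := by
  simpa only [lpIdx_eq_lqIdx, tsum_fintype, Finset.sum_coe_sort A fun a => f a * g a] using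
    tsum_mul_le_lqIdx_mul_lqIdx p q (fun a : A => f a) (fun a : A => g a)

lemma lpIdx_le_of_card_support_le {p : ℝ≥0∞} (hp : p ≠ 0) {A : Finset ι} {g : ι → ℝ≥0∞}
    {M : ℝ≥0∞} {n : ℕ} (hcard : (A.filter (g · ≠ 0)).card ≤ n) (hg : ∀ a ∈ A, g a ≤ M) :
    lpIdx p A g ≤ n ^ (1 / p).toReal * M := by
  rcases eq_or_ne p ∞ with rfl | hp_top
  · simpa [lpIdx] using hg
  have hp_pos : 0 < p.toReal := toReal_pos hp hp_top
  have hsum : ∑ a ∈ A, g a ^ p.toReal ≤ n * M ^ p.toReal := by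
    calc ∑ a ∈ A, g a ^ p.toReal = ∑ a ∈ A with g a ≠ 0, g a ^ p.toReal := by
          refine (Finset.sum_filter_of_ne fun a _ h => ?_).symm
          contrapose! h
          simp [h, hp_pos]
      _ ≤ (A.filter (g · ≠ 0)).card • M ^ p.toReal := by
          refine Finset.sum_le_card_nsmul _ _ _ fun a ha => ?_
          gcongr
          exact hg a (Finset.mem_filter.1 ha).1
      _ ≤ n * M ^ p.toReal := by
          rw [nsmul_eq_mul]
          gcongr
  calc lpIdx p A g = (∑ a ∈ A, g a ^ p.toReal) ^ (1 / p.toReal) := if_neg hp_top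
    _ ≤ (n * M ^ p.toReal) ^ (1 / p.toReal) := by gcongr
    _ = n ^ (1 / p).toReal * M := by
        rw [ENNReal.mul_rpow_of_nonneg _ _ (by positivity), ← ENNReal.rpow_mul,
          mul_one_div_cancel hp_pos.ne', ENNReal.rpow_one, ENNReal.toReal_div, toReal_one]

lemma lqIdx_geometric (q : ℝ≥0∞) {r : ℝ≥0∞} (hr : r ≤ 1) :
    lqIdx q (fun j : ℕ => r ^ j) = (1 - r ^ q.toReal) ^ (-(1 / q.toReal)) := by
  rcases eq_or_ne q ∞ with rfl | hq
  · have hsup : ⨆ j : ℕ, r ^ j = 1 :=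
      le_antisymm (iSup_le fun j => pow_le_one₀ zero_le hr) (le_iSup_of_le 0 (pow_zero r).ge)
    simp [lqIdx, hsup]
  · have hpow (j : ℕ) : (r ^ j) ^ q.toReal = (r ^ q.toReal) ^ j := by
      rw [← rpow_natCast_mul, ← rpow_mul_natCast, mul_comm]
    simp only [lqIdx, hq, if_false, hpow, ENNReal.tsum_geometric, rpow_neg, inv_rpow]

lemma summable_and_tsum_le_toReal {g : ι → ℝ} (hg : ∀ i, 0 ≤ g i) {B : ℝ≥0∞} (hB : B ≠ ∞)
    (h : ∑' i, ENNReal.ofReal (g i) ≤ B) : Summable g ∧ ∑' i, g i ≤ B.toReal := by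
  have hsum : Summable g := by
    simpa only [toReal_ofReal (hg _)] using ENNReal.summable_toReal (ne_top_of_le_ne_top hB h)
  refine ⟨hsum, (ofReal_le_iff_le_toReal hB).1 ?_⟩
  rwa [ofReal_tsum_of_nonneg hg hsum]

end SequenceNorms

section FiniteSums

lemma sum_range_mul_eq_sum_sum {M : Type*} [AddCommMonoid M] (m n : ℕ) (F : ℕ → M) :
    ∑ l ∈ Finset.range (m * n), F l =
      ∑ k ∈ Finset.range n, ∑ i ∈ Finset.range m, F (m * k + i) := by
  induction n with
  | zero => simp
  | succ n ih => rw [Nat.mul_succ, Finset.sum_range_add, ih, Finset.sum_range_succ]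

lemma sum_card_mul_sub_sum_mul {ι R : Type*} [CommRing R] (s : Finset ι) (a u : ι → R) :
    ∑ i ∈ s, (s.card * a i - ∑ l ∈ s, a l) * (s.card * u i - ∑ l ∈ s, u l) =
      s.card * (s.card * ∑ i ∈ s, a i * u i - (∑ i ∈ s, a i) * ∑ i ∈ s, u i) := by
  set A := ∑ l ∈ s, a l
  set U := ∑ l ∈ s, u l
  have hexpand (i : ι) : (s.card * a i - A) * (s.card * u i - U) =
      s.card ^ 2 * (a i * u i) - s.card * U * a i - s.card * A * u i + A * U := by ring
  simp only [hexpand, Finset.sum_add_distrib, Finset.sum_sub_distrib, Finset.sum_const,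
    nsmul_eq_mul, ← Finset.mul_sum]
  ring

end FiniteSums

section BadicIntervals

variable {b n k : ℕ} {x : ℝ}

/-- The `k`-th half-open `b`-adic interval of length `b⁻ⁿ`. -/
def badicInterval (b n k : ℕ) : Set ℝ := Ico (k / (b : ℝ) ^ n) ((k + 1) / (b : ℝ) ^ n)

lemma measurableSet_badicInterval : MeasurableSet (badicInterval b n k) := measurableSet_Ico

lemma mem_badicInterval_iff_floor_eq (hb : 0 < b) :
    x ∈ badicInterval b n k ↔ ⌊(b : ℝ) ^ n * x⌋ = k := by
  have : (0 : ℝ) < (b : ℝ) ^ n := by positivity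
  rw [badicInterval, mem_Ico, Int.floor_eq_iff, div_le_iff₀' this, lt_div_iff₀' this]
  rfl

lemma eq_of_mem_badicInterval (hb : 0 < b) {l : ℕ} (hk : x ∈ badicInterval b n k)
    (hl : x ∈ badicInterval b n l) : k = l := by
  rw [mem_badicInterval_iff_floor_eq hb] at hk hl
  exact_mod_cast hk.symm.trans hl

lemma pairwise_disjoint_badicInterval (hb : 0 < b) (n : ℕ) :
    Pairwise (Function.onFun Disjoint (badicInterval b n)) := fun _ _ hne =>
  Set.disjoint_left.2 fun _ hk hl => hne (eq_of_mem_badicInterval hb hk hl)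

lemma badicInterval_eq_biUnion (hb : 0 < b) (n k : ℕ) :
    badicInterval b n k = ⋃ i ∈ Finset.range b, badicInterval b (n + 1) (b * k + i) := by
  ext x
  have hfloor : ⌊(b : ℝ) ^ n * x⌋ = ⌊(b : ℝ) ^ (n + 1) * x⌋ / b := by
    rw [← Int.floor_div_natCast, pow_succ]
    congr 1
    field_simp
  have hb' : (0 : ℤ) < b := by exact_mod_cast hb
  simp only [mem_badicInterval_iff_floor_eq hb, mem_iUnion, Finset.mem_range, exists_prop, hfloor]
  generalize ⌊(b : ℝ) ^ (n + 1) * x⌋ = m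
  constructor
  · intro h
    have hmod : ((m % b).toNat : ℤ) = m % b := Int.toNat_of_nonneg (Int.emod_nonneg _ hb'.ne')
    refine ⟨(m % b).toNat, ?_, ?_⟩
    · have := Int.emod_lt_of_pos m hb'
      lia
    · push_cast
      rw [hmod, ← h, Int.mul_ediv_add_emod]
  · rintro ⟨i, hi, rfl⟩
    push_cast
    rw [Int.mul_add_ediv_left _ _ hb'.ne', Int.ediv_eq_zero_of_lt (by lia) (by lia), add_zero]

lemma pairwiseDisjoint_badicInterval_children (hb : 0 < b) (n k : ℕ) (s : Set ℕ) :
    s.PairwiseDisjoint fun i => badicInterval b (n + 1) (b * k + i) := fun _ _ _ _ hne =>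
  pairwise_disjoint_badicInterval hb _ (by simpa using hne)

lemma indicator_badicInterval_eq_sum (hb : 0 < b) (n k : ℕ) (f : ℝ → ℝ) (x : ℝ) :
    (badicInterval b n k).indicator f x =
      ∑ i ∈ Finset.range b, (badicInterval b (n + 1) (b * k + i)).indicator f x := by
  rw [badicInterval_eq_biUnion hb, Finset.indicator_biUnion_apply]
  exact pairwiseDisjoint_badicInterval_children hb n k _

lemma badicInterval_subset_Ico (hb : 0 < b) (hk : k < b ^ n) :
    badicInterval b n k ⊆ Ico 0 1 := by
  have hk' : (k : ℝ) + 1 ≤ (b : ℝ) ^ n := by exact_mod_cast hk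
  exact Ico_subset_Ico (by positivity) ((div_le_one (by positivity)).2 hk')

lemma exists_mem_badicInterval (hb : 0 < b) (n : ℕ) (hx : x ∈ Ico (0 : ℝ) 1) :
    ∃ k < b ^ n, x ∈ badicInterval b n k := by
  have hnn : 0 ≤ (b : ℝ) ^ n * x := mul_nonneg (by positivity) hx.1
  refine ⟨⌊(b : ℝ) ^ n * x⌋₊, (Nat.floor_lt hnn).2 ?_,
    (mem_badicInterval_iff_floor_eq hb).2 (Int.natCast_floor_eq_floor hnn).symm⟩
  push_cast
  exact mul_lt_of_lt_one_right (by positivity) hx.2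

lemma setIntegral_badicInterval_eq_sum (hb : 0 < b) (n k : ℕ) {f : ℝ → ℝ}
    (hf : IntegrableOn f (badicInterval b n k)) :
    ∫ y in badicInterval b n k, f y =
      ∑ i ∈ Finset.range b, ∫ y in badicInterval b (n + 1) (b * k + i), f y := by
  rw [badicInterval_eq_biUnion hb] at hf ⊢
  exact integral_biUnion_finset _ (fun _ _ => measurableSet_badicInterval)
    (pairwiseDisjoint_badicInterval_children hb n k _) (integrableOn_finset_iUnion.1 hf)

end BadicIntervals

section BadicProjection

open Filter Topology

variable {b n k : ℕ} {f : ℝ → ℝ}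

/-- The step function equal on each `b`-adic interval of length `b⁻ⁿ` in `[0, 1)` to the mean of
`f` over it, and to `0` outside `[0, 1)`: the orthogonal projection of `f` onto these step
functions. -/
def badicProj (b n : ℕ) (f : ℝ → ℝ) (x : ℝ) : ℝ :=
  (b : ℝ) ^ n * ∑ k ∈ Finset.range (b ^ n),
    (∫ y in badicInterval b n k, f y) * (badicInterval b n k).indicator 1 x

lemma badicProj_eq_average (hb : 0 < b) (hk : k < b ^ n) {x : ℝ} (hx : x ∈ badicInterval b n k) :
    badicProj b n f x = ⨍ y in badicInterval b n k, f y := by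
  have hlength : volume.real (badicInterval b n k) = ((b : ℝ) ^ n)⁻¹ := by
    rw [badicInterval, Real.volume_real_Ico_of_le (by gcongr; linarith)]
    ring
  rw [badicProj, Finset.sum_eq_single_of_mem k (Finset.mem_range.2 hk), setAverage_eq, hlength,
    indicator_of_mem hx, inv_inv, Pi.one_apply, mul_one, smul_eq_mul]
  intro l _ hl
  rw [indicator_of_notMem fun hxl => hl (eq_of_mem_badicInterval hb hxl hx), mul_zero]

lemma badicProj_congr_on_Ico {g : ℝ → ℝ} (hb : 0 < b) (n : ℕ) (hfg : EqOn f g (Ico 0 1)) (x : ℝ) :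
    badicProj b n f x = badicProj b n g x := by
  unfold badicProj
  congr! 3 with k hk
  exact setIntegral_congr_fun measurableSet_badicInterval
    (hfg.mono (badicInterval_subset_Ico hb (Finset.mem_range.1 hk)))

lemma ae_tendsto_average_Ico (hf : LocallyIntegrable f) :
    ∀ᵐ x, ∀ {ι : Type*} {l : Filter ι} (u v : ι → ℝ), (∀ j, x ∈ Ico (u j) (v j)) →
      Tendsto (fun j => v j - u j) l (𝓝 0) →
        Tendsto (fun j => ⨍ y in Ico (u j) (v j), f y) l (𝓝 (f x)) := by
  filter_upwards [IsUnifLocDoublingMeasure.ae_tendsto_average volume hf 1]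
    with x hlebesgue ι l u v hx hlength
  have hpos (j : ι) : 0 < (v j - u j) / 2 := by linarith [(hx j).1, (hx j).2]
  have hball (j : ι) : Metric.closedBall ((u j + v j) / 2) ((v j - u j) / 2) = Icc (u j) (v j) := by
    rw [Real.closedBall_eq_Icc]
    congr 1 <;> ring
  have hradius : Tendsto (fun j => (v j - u j) / 2) l (𝓝[>] 0) :=
    tendsto_nhdsWithin_iff.2
      ⟨by simpa using hlength.div_const 2, Eventually.of_forall hpos⟩
  refine (hlebesgue (fun j => (u j + v j) / 2) _ hradius
    (Eventually.of_forall fun j => ?_)).congr fun j => ?_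
  · rw [one_mul, hball]
    exact Ico_subset_Icc_self (hx j)
  · rw [hball]
    exact setAverage_congr Ico_ae_eq_Icc.symm

lemma ae_tendsto_badicProj (hb : 1 < b) (hf : LocallyIntegrable f) :
    ∀ᵐ x, x ∈ Ico (0 : ℝ) 1 → Tendsto (badicProj b · f x) atTop (𝓝 (f x)) := by
  filter_upwards [ae_tendsto_average_Ico hf] with x hlebesgue hx
  have hb0 : 0 < b := by lia
  choose k hk hxk using fun n => exists_mem_badicInterval hb0 n hx
  simp only [fun n => badicProj_eq_average (f := f) hb0 (hk n) (hxk n)]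
  refine hlebesgue _ _ hxk ?_
  simpa [← sub_div, Function.comp_def] using
    tendsto_inv_atTop_zero.comp (tendsto_pow_atTop_atTop_of_one_lt (Nat.one_lt_cast (α := ℝ).2 hb))

end BadicProjection

section HaarSystem

variable {b n i k : ℕ} {f : ℝ → ℝ}

lemma deltaIdx_succ (b n : ℕ) : deltaIdx b (n + 1) = Finset.range (b ^ n) := rfl

lemma nablaIdx_succ (b n : ℕ) : nablaIdx b (n + 1) = Finset.range b := rfl

lemma card_nablaIdx_le (hb : 0 < b) (j : ℕ) : (nablaIdx b j).card ≤ b := by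
  cases j with
  | zero => exact hb
  | succ n => exact (Finset.card_range b).le

lemma haarPsi_zero (b i k : ℕ) : haarPsi b 0 i k = (badicInterval b 0 0).indicator 1 := by
  ext x
  simp only [haarPsi, badicInterval, if_true, pow_zero, div_one, Nat.cast_zero, zero_add]
  rfl

lemma haarPsi_succ (b n i k : ℕ) (x : ℝ) :
    haarPsi b (n + 1) i k x = (b : ℝ) ^ (((n + 1 : ℕ) : ℝ) / 2 - 1) *
      (b * (badicInterval b (n + 1) (b * k + i)).indicator 1 x -
        (badicInterval b n k).indicator 1 x) := by
  have hneg : (b : ℝ) ^ (-((n + 1 : ℕ) : ℝ)) = ((b : ℝ) ^ (n + 1))⁻¹ := by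
    rw [Real.rpow_neg b.cast_nonneg, Real.rpow_natCast]
  have hsub : (b : ℝ) ^ (1 - ((n + 1 : ℕ) : ℝ)) = ((b : ℝ) ^ n)⁻¹ := by
    rw [Nat.cast_succ, sub_add_cancel_right, Real.rpow_neg b.cast_nonneg, Real.rpow_natCast]
  simp only [haarPsi, n.succ_ne_zero, if_false, hneg, hsub, badicInterval, div_eq_inv_mul]
  push_cast
  rfl

lemma haarPsi_succ_eq_zero (hb : 0 < b) (hi : i < b) {x : ℝ} (hx : x ∉ badicInterval b n k) :
    haarPsi b (n + 1) i k x = 0 := by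
  have hsub : badicInterval b (n + 1) (b * k + i) ⊆ badicInterval b n k := by
    rw [badicInterval_eq_biUnion hb n k]
    exact subset_biUnion_of_mem (u := fun i => badicInterval b (n + 1) (b * k + i))
      (Finset.mem_range.2 hi)
  rw [haarPsi_succ, indicator_of_notMem hx, indicator_of_notMem fun h => hx (hsub h)]
  ring

lemma card_haarPsi_ne_zero_le (hb : 0 < b) (j : ℕ) (x : ℝ) :
    ((deltaIdx b j ×ˢ nablaIdx b j).filter fun ki => haarPsi b j ki.2 ki.1 x ≠ 0).card ≤ b := by
  refine (Finset.card_le_card_of_injOn Prod.snd (t := nablaIdx b j) ?_ ?_).trans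
    (card_nablaIdx_le hb j)
  · intro ki hki
    exact (Finset.mem_product.1 (Finset.mem_filter.1 hki).1).2
  · rintro ⟨k, i⟩ hk ⟨l, i'⟩ hl (rfl : i = i')
    simp only [Finset.coe_filter, Finset.mem_product, mem_ofPred_eq] at hk hl
    cases j with
    | zero => simp_all [deltaIdx]
    | succ n =>
      have hi : i < b := Finset.mem_range.1 hk.1.2
      have hxk : x ∈ badicInterval b n k := by
        by_contra h
        exact hk.2 (haarPsi_succ_eq_zero hb hi h)
      have hxl : x ∈ badicInterval b n l := by
        by_contra h
        exact hl.2 (haarPsi_succ_eq_zero hb hi h)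
      rw [eq_of_mem_badicInterval hb hxk hxl]

lemma abs_haarPsi_le (hb : 0 < b) (j i k : ℕ) (x : ℝ) :
    |haarPsi b j i k x| ≤ (b : ℝ) ^ ((j : ℝ) / 2) := by
  cases j with
  | zero => by_cases hx : x ∈ Ico (0 : ℝ) 1 <;> simp [haarPsi, hx]
  | succ n =>
    have hb1 : (1 : ℝ) ≤ b := by exact_mod_cast hb
    have hunit (s : Set ℝ) : 0 ≤ s.indicator (1 : ℝ → ℝ) x ∧ s.indicator (1 : ℝ → ℝ) x ≤ 1 := by
      by_cases h : x ∈ s <;> simp [h]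
    have hdiff : |(b : ℝ) * (badicInterval b (n + 1) (b * k + i)).indicator 1 x -
        (badicInterval b n k).indicator 1 x| ≤ b := by
      obtain ⟨hchild0, hchild1⟩ := hunit (badicInterval b (n + 1) (b * k + i))
      obtain ⟨hparent0, hparent1⟩ := hunit (badicInterval b n k)
      exact abs_le.2 ⟨by nlinarith, by nlinarith⟩
    rw [haarPsi_succ, abs_mul, abs_of_nonneg (by positivity)]
    calc (b : ℝ) ^ (((n + 1 : ℕ) : ℝ) / 2 - 1) * _
        ≤ (b : ℝ) ^ (((n + 1 : ℕ) : ℝ) / 2 - 1) * b := by gcongr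
      _ = (b : ℝ) ^ (((n + 1 : ℕ) : ℝ) / 2) := by
        rw [Real.rpow_sub_one (by positivity), div_mul_cancel₀ _ (by positivity)]

end HaarSystem

section PartialSums

open Filter Topology

variable {b n i k : ℕ} {f : ℝ → ℝ}

lemma mul_indicator_one_apply {α R : Type*} [MulZeroOneClass R] (s : Set α) (g : α → R) (x : α) :
    g x * s.indicator 1 x = s.indicator g x := by
  by_cases h : x ∈ s <;> simp [h]

lemma setIntegral_Icc_indicator_badicInterval (hb : 0 < b) (hk : k < b ^ n) (f : ℝ → ℝ) :
    ∫ y in Icc 0 1, (badicInterval b n k).indicator f y = ∫ y in badicInterval b n k, f y := by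
  rw [setIntegral_indicator measurableSet_badicInterval, inter_eq_self_of_subset_right
    ((badicInterval_subset_Ico hb hk).trans Ico_subset_Icc_self)]

lemma haarCoefU_zero (hb : 0 < b) (f : ℝ → ℝ) (i k : ℕ) :
    haarCoefU b f 0 i k = ∫ y in badicInterval b 0 0, f y := by
  simp only [haarCoefU, haarPsi_zero, mul_indicator_one_apply]
  exact setIntegral_Icc_indicator_badicInterval hb (by simp) f

lemma haarCoefU_succ (hb : 0 < b) (hf : IntegrableOn f (Icc 0 1)) (hi : i < b) (hk : k < b ^ n) :
    haarCoefU b f (n + 1) i k = (b : ℝ) ^ (((n + 1 : ℕ) : ℝ) / 2 - 1) *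
      (b * (∫ y in badicInterval b (n + 1) (b * k + i), f y) -
        ∫ y in badicInterval b n k, f y) := by
  have hchild : b * k + i < b ^ (n + 1) := by
    rw [pow_succ]
    nlinarith
  have hint (m l : ℕ) : IntegrableOn ((badicInterval b m l).indicator f) (Icc 0 1) :=
    hf.indicator measurableSet_badicInterval
  have hprod (y : ℝ) : f y * haarPsi b (n + 1) i k y = (b : ℝ) ^ (((n + 1 : ℕ) : ℝ) / 2 - 1) *
      (b * (badicInterval b (n + 1) (b * k + i)).indicator f y -
        (badicInterval b n k).indicator f y) := by
    rw [haarPsi_succ, ← mul_indicator_one_apply (badicInterval b (n + 1) (b * k + i)) f,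
      ← mul_indicator_one_apply (badicInterval b n k) f]
    ring
  simp only [haarCoefU, hprod]
  rw [integral_const_mul, integral_sub ((hint _ _).const_mul _) (hint _ _), integral_const_mul,
    setIntegral_Icc_indicator_badicInterval hb hchild,
    setIntegral_Icc_indicator_badicInterval hb hk]

lemma sum_haarCoefU_mul_haarPsi_children (hb : 0 < b) (hf : IntegrableOn f (Icc 0 1))
    (hk : k < b ^ n) (x : ℝ) :
    ∑ i ∈ Finset.range b, haarCoefU b f (n + 1) i k * haarPsi b (n + 1) i k x =
      (b : ℝ) ^ (n + 1) * ∑ i ∈ Finset.range b,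
          (∫ y in badicInterval b (n + 1) (b * k + i), f y) *
            (badicInterval b (n + 1) (b * k + i)).indicator 1 x -
        (b : ℝ) ^ n *
          ((∫ y in badicInterval b n k, f y) * (badicInterval b n k).indicator 1 x) := by
  set w := (b : ℝ) ^ (((n + 1 : ℕ) : ℝ) / 2 - 1) with hw
  set a : ℕ → ℝ := fun i => ∫ y in badicInterval b (n + 1) (b * k + i), f y
  set u : ℕ → ℝ := fun i => (badicInterval b (n + 1) (b * k + i)).indicator 1 x
  have hfk : IntegrableOn f (badicInterval b n k) :=
    hf.mono_set ((badicInterval_subset_Ico hb hk).trans Ico_subset_Icc_self)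
  have hweight : w ^ 2 * b = (b : ℝ) ^ n := by
    rw [hw, ← Real.rpow_mul_natCast b.cast_nonneg, ← Real.rpow_add_one (by positivity),
      ← Real.rpow_natCast]
    congr 1
    push_cast
    ring
  rw [setIntegral_badicInterval_eq_sum hb n k hfk, indicator_badicInterval_eq_sum hb n k]
  calc ∑ i ∈ Finset.range b, haarCoefU b f (n + 1) i k * haarPsi b (n + 1) i k x
      = w ^ 2 * ∑ i ∈ Finset.range b, (b * a i - ∑ l ∈ Finset.range b, a l) *
          (b * u i - ∑ l ∈ Finset.range b, u l) := by
        rw [Finset.mul_sum]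
        refine Finset.sum_congr rfl fun i hi => ?_
        rw [haarCoefU_succ hb hf (Finset.mem_range.1 hi) hk, haarPsi_succ,
          setIntegral_badicInterval_eq_sum hb n k hfk, indicator_badicInterval_eq_sum hb n k]
        ring
    _ = w ^ 2 * (b * (b * ∑ i ∈ Finset.range b, a i * u i -
          (∑ i ∈ Finset.range b, a i) * ∑ i ∈ Finset.range b, u i)) := by
        simpa only [Finset.card_range] using
          congrArg (w ^ 2 * ·) (sum_card_mul_sub_sum_mul (Finset.range b) a u)
    _ = (b : ℝ) ^ (n + 1) * ∑ i ∈ Finset.range b, a i * u i -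
          (b : ℝ) ^ n * ((∑ i ∈ Finset.range b, a i) * ∑ i ∈ Finset.range b, u i) := by
        linear_combination (b * ∑ i ∈ Finset.range b, a i * u i -
          (∑ i ∈ Finset.range b, a i) * ∑ i ∈ Finset.range b, u i) * hweight

lemma sum_haarCoefU_mul_haarPsi_succ (hb : 0 < b) (hf : IntegrableOn f (Icc 0 1)) (n : ℕ) (x : ℝ) :
    ∑ k ∈ deltaIdx b (n + 1), ∑ i ∈ nablaIdx b (n + 1),
      haarCoefU b f (n + 1) i k * haarPsi b (n + 1) i k x =
      badicProj b (n + 1) f x - badicProj b n f x := by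
  rw [deltaIdx_succ, nablaIdx_succ, Finset.sum_congr rfl fun k hk =>
    sum_haarCoefU_mul_haarPsi_children hb hf (Finset.mem_range.1 hk) x]
  rw [Finset.sum_sub_distrib, ← Finset.mul_sum, ← Finset.mul_sum, badicProj, badicProj,
    pow_succ' b n, sum_range_mul_eq_sum_sum]

lemma sum_range_haarCoefU_mul_haarPsi_eq_badicProj (hb : 0 < b) (hf : IntegrableOn f (Icc 0 1))
    (n : ℕ) (x : ℝ) :
    ∑ j ∈ Finset.range (n + 1), ∑ k ∈ deltaIdx b j, ∑ i ∈ nablaIdx b j,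
      haarCoefU b f j i k * haarPsi b j i k x = badicProj b n f x := by
  induction n with
  | zero => simp [deltaIdx, nablaIdx, haarCoefU_zero hb, haarPsi_zero, badicProj]
  | succ n ih =>
    rw [Finset.sum_range_succ, ih, sum_haarCoefU_mul_haarPsi_succ hb hf, add_sub_cancel]

lemma ae_tendsto_sum_range_haarCoefU_mul_haarPsi (hb : 1 < b) (hf : IntegrableOn f (Icc 0 1)) :
    ∀ᵐ x ∂volume.restrict (Icc (0 : ℝ) 1), Tendsto (fun n => ∑ j ∈ Finset.range n,
      ∑ k ∈ deltaIdx b j, ∑ i ∈ nablaIdx b j, haarCoefU b f j i k * haarPsi b j i k x)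
      atTop (𝓝 (f x)) := by
  have hb0 : 0 < b := by lia
  have hloc : LocallyIntegrable ((Ico (0 : ℝ) 1).indicator f) :=
    ((hf.mono_set Ico_subset_Icc_self).integrable_indicator measurableSet_Ico).locallyIntegrable
  rw [← restrict_Ico_eq_restrict_Icc, ae_restrict_iff' measurableSet_Ico]
  filter_upwards [ae_tendsto_badicProj hb hloc] with x hlim hx
  refine (tendsto_add_atTop_iff_nat 1).1 ?_
  simp only [sum_range_haarCoefU_mul_haarPsi_eq_badicProj hb0 hf]
  simpa only [indicator_of_mem hx, badicProj_congr_on_Ico hb0 _ (eqOn_indicator) x] using hlim hx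

end PartialSums

section AbsoluteConvergence

variable {b : ℕ} {α : ℝ} {p p' q q' : ℝ≥0∞}

lemma sum_mul_abs_haarPsi_le (hb : 0 < b) [p.HolderConjugate p'] (j : ℕ) (c : ℕ → ℕ → ℝ) (x : ℝ) :
    ENNReal.ofReal (∑ k ∈ deltaIdx b j, ∑ i ∈ nablaIdx b j, |c i k| * |haarPsi b j i k x|) ≤
      b ^ (1 / p').toReal * (ENNReal.ofReal ((b : ℝ) ^ ((j : ℝ) / 2)) *
        lpIdx p (deltaIdx b j ×ˢ nablaIdx b j) fun ki => ENNReal.ofReal |c ki.2 ki.1|) := by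
  have hpsi : lpIdx p' (deltaIdx b j ×ˢ nablaIdx b j)
      (fun ki => ENNReal.ofReal |haarPsi b j ki.2 ki.1 x|) ≤
      b ^ (1 / p').toReal * ENNReal.ofReal ((b : ℝ) ^ ((j : ℝ) / 2)) :=
    lpIdx_le_of_card_support_le (HolderConjugate.ne_zero p' p)
      (by simpa using card_haarPsi_ne_zero_le hb j x)
      fun ki _ => ofReal_le_ofReal (abs_haarPsi_le hb j ki.2 ki.1 x)
  rw [← Finset.sum_product', ofReal_sum_of_nonneg fun _ _ => by positivity]
  simp only [ofReal_mul (abs_nonneg _)]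
  refine (sum_mul_le_lpIdx_mul_lpIdx p p' _ _ _).trans ?_
  rw [mul_comm (lpIdx p _ _), ← mul_assoc]
  gcongr

lemma tsum_haar_levels_le (hb : 0 < b) [p.HolderConjugate p'] [q'.HolderConjugate q] (f : ℝ → ℝ)
    (x : ℝ) :
    ∑' j, ENNReal.ofReal (∑ k ∈ deltaIdx b j, ∑ i ∈ nablaIdx b j,
      |haarCoefU b f j i k| * |haarPsi b j i k x|) ≤
      b ^ (1 / p').toReal *
        lqIdx q' (fun j : ℕ => ENNReal.ofReal ((b : ℝ) ^ (-(α - 1 / p.toReal))) ^ j) *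
          wavNormU b α p q f := by
  have hb' : (0 : ℝ) < b := by exact_mod_cast hb
  have hweight (j : ℕ) : ENNReal.ofReal ((b : ℝ) ^ (-(α - 1 / p.toReal))) ^ j *
      ENNReal.ofReal ((b : ℝ) ^ ((α - 1 / p.toReal + 1 / 2) * j)) =
        ENNReal.ofReal ((b : ℝ) ^ ((j : ℝ) / 2)) := by
    rw [← ofReal_pow (by positivity), ← Real.rpow_mul_natCast hb'.le,
      ← ofReal_mul (by positivity), ← Real.rpow_add hb']
    ring_nf
  rw [mul_assoc]
  refine (ENNReal.tsum_le_tsum fun j =>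
    sum_mul_abs_haarPsi_le (p := p) (p' := p') hb j _ x).trans ?_
  simp only [ENNReal.tsum_mul_left, ← hweight, mul_assoc]
  gcongr
  exact tsum_mul_le_lqIdx_mul_lqIdx q' q _ _

lemma ofReal_Cconst (hb : 1 < b) (hα : 0 ≤ α - 1 / p.toReal)
    (hq' : q' ≠ ∞ → 0 < α - 1 / p.toReal) (hq'0 : q' ≠ 0) :
    ENNReal.ofReal (Cconst b α p p' q') = b ^ (1 / p').toReal *
        lqIdx q' (fun j : ℕ => ENNReal.ofReal ((b : ℝ) ^ (-(α - 1 / p.toReal))) ^ j) := by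
  have hb' : (1 : ℝ) < b := by exact_mod_cast hb
  have hratio : ENNReal.ofReal ((b : ℝ) ^ (-(α - 1 / p.toReal))) ≤ 1 := by
    rw [ofReal_le_one]
    exact Real.rpow_le_one_of_one_le_of_nonpos hb'.le (by linarith)
  rw [lqIdx_geometric q' hratio, Cconst, ofReal_mul (by positivity),
    ← ofReal_rpow_of_nonneg b.cast_nonneg toReal_nonneg, ofReal_natCast]
  congr 1
  rcases eq_or_ne q' ∞ with rfl | hq'top
  · simp
  have hq'pos : 0 < q'.toReal := toReal_pos hq'0 hq'top
  have hexponent : -(α - 1 / p.toReal) * q'.toReal = -q'.toReal * (α - 1 / p.toReal) := by ring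
  have hlt : (b : ℝ) ^ (-q'.toReal * (α - 1 / p.toReal)) < 1 :=
    Real.rpow_lt_one_of_one_lt_of_neg hb' (by nlinarith [hq' hq'top])
  rw [ofReal_rpow_of_nonneg (by positivity) toReal_nonneg, ← Real.rpow_mul b.cast_nonneg,
    hexponent, ← ofReal_one, ← ofReal_sub _ (by positivity), ofReal_rpow_of_pos (sub_pos.2 hlt)]

lemma Cconst_nonneg (hb : 1 ≤ b) (hα : 0 ≤ α - 1 / p.toReal) : 0 ≤ Cconst b α p p' q' := by
  have hb' : (1 : ℝ) ≤ b := by exact_mod_cast hb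
  have hle : (b : ℝ) ^ (-q'.toReal * (α - 1 / p.toReal)) ≤ 1 :=
    Real.rpow_le_one_of_one_le_of_nonpos hb' (mul_nonpos_of_nonpos_of_nonneg (by simp) hα)
  exact mul_nonneg (by positivity) (Real.rpow_nonneg (sub_nonneg.2 hle) _)

lemma summable_haar_levels_and_tsum_le (hb : 1 < b) [p.HolderConjugate p'] [q'.HolderConjugate q]
    (hα : 0 ≤ α - 1 / p.toReal) (hq' : q' ≠ ∞ → 0 < α - 1 / p.toReal) {f : ℝ → ℝ}
    (hf : wavNormU b α p q f ≠ ∞) (x : ℝ) :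
    Summable (fun j => ∑ k ∈ deltaIdx b j, ∑ i ∈ nablaIdx b j,
      |haarCoefU b f j i k| * |haarPsi b j i k x|) ∧
    ∑' j, ∑ k ∈ deltaIdx b j, ∑ i ∈ nablaIdx b j, |haarCoefU b f j i k| * |haarPsi b j i k x| ≤
      Cconst b α p p' q' * (wavNormU b α p q f).toReal := by
  have hbound := tsum_haar_levels_le (α := α) (p := p) (p' := p') (q := q) (q' := q')
    (zero_lt_one.trans hb) f x
  rw [← ofReal_Cconst hb hα hq' (HolderConjugate.ne_zero q' q)] at hbound
  simpa only [toReal_mul, toReal_ofReal (Cconst_nonneg hb.le hα)] using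
    summable_and_tsum_le_toReal (fun j => by positivity) (mul_ne_top ofReal_ne_top hf) hbound

lemma wavExpU_eq_of_tendsto {f : ℝ → ℝ} {x y : ℝ}
    (habs : Summable fun j => ∑ k ∈ deltaIdx b j, ∑ i ∈ nablaIdx b j,
      |haarCoefU b f j i k| * |haarPsi b j i k x|)
    (hlim : Filter.Tendsto (fun n => ∑ j ∈ Finset.range n, ∑ k ∈ deltaIdx b j,
      ∑ i ∈ nablaIdx b j, haarCoefU b f j i k * haarPsi b j i k x) Filter.atTop (nhds y)) :
    wavExpU b f x = y := by
  have hsum : Summable fun j => ∑ k ∈ deltaIdx b j, ∑ i ∈ nablaIdx b j,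
      haarCoefU b f j i k * haarPsi b j i k x :=
    habs.of_norm_bounded fun j =>
      norm_sum_le_of_le _ fun k _ => norm_sum_le_of_le _ fun i _ => (abs_mul _ _).le
  exact tendsto_nhds_unique hsum.hasSum.tendsto_sum_nat hlim

end AbsoluteConvergence

/-- For `f` with finite Haar wavelet norm the wavelet expansion converges
absolutely at every point, with bound `C_{b,α,p,q} ‖f‖_{wav,α,p,q}`, and `S(f) = f` a.e. -/
theorem wavelet_expansion_abs_convergence (b : ℕ) (hb : 2 ≤ b)
    (p q p' q' : ℝ≥0∞) (hp : 1 ≤ p) (hq : 1 ≤ q)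
    (hp' : 1 / p + 1 / p' = 1) (hq' : 1 / q + 1 / q' = 1)
    (α : ℝ) (hα1 : q = 1 → 1 / p.toReal ≤ α) (hα2 : 1 < q → 1 / p.toReal < α)
    (f : ℝ → ℝ) (hf1 : Integrable f (volume.restrict (Set.Icc (0:ℝ) 1)))
    (hfw : wavNormU b α p q f < ∞) :
    (∀ x ∈ Set.Icc (0:ℝ) 1,
      Summable (fun j : ℕ =>
        ∑ k ∈ deltaIdx b j, ∑ i ∈ nablaIdx b j, |haarCoefU b f j i k| * |haarPsi b j i k x|) ∧
      (∑' j : ℕ,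
        ∑ k ∈ deltaIdx b j, ∑ i ∈ nablaIdx b j, |haarCoefU b f j i k| * |haarPsi b j i k x|) ≤
          Cconst b α p p' q' * (wavNormU b α p q f).toReal) ∧
    (∀ᵐ x ∂(volume.restrict (Set.Icc (0:ℝ) 1)), wavExpU b f x = f x) := by
  have : p.HolderConjugate p' := holderConjugate_iff.2 (by simpa using hp')
  have : q'.HolderConjugate q := holderConjugate_iff.2 (by simpa [add_comm] using hq')
  have hα : 0 ≤ α - 1 / p.toReal :=
    sub_nonneg.2 (hq.eq_or_lt.elim (fun h => hα1 h.symm) fun h => (hα2 h).le)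
  have hpos : q' ≠ ∞ → 0 < α - 1 / p.toReal := fun h =>
    sub_pos.2 (hα2 (hq.lt_of_ne' ((HolderConjugate.ne_top_iff_ne_one q' q).1 h)))
  have hconv := summable_haar_levels_and_tsum_le (p' := p') hb hα hpos hfw.ne
  refine ⟨fun x _ => hconv x, ?_⟩
  filter_upwards [ae_tendsto_sum_range_haarCoefU_mul_haarPsi hb hf1] with x hlim
  exact wavExpU_eq_of_tendsto (hconv x).1 hlim

end
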